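/- arXiv:2012.07369 — 3 statements merged into one kernel-verified Lean document; each statement's English description precedes it below -/
import Mathlib

section
/- (Lemma 2 of the paper.) Let κ be a Markov kernel on ℝⁿ whose transition density is bounded by φ̄ ≥ 0, let s₀ ∈ ℝⁿ, and let P be the law on the path space ℕ → ℝⁿ of the Markov chain (s_k) started at s₀ with transition kernel κ (given by the Ionescu–Tulcea construction). Then for every measurable set A ⊆ ℝⁿ, the probability that the whole trajectory remains in A satisfies P[ s_k ∈ A for all k ≥ 1 ] ≤ φ̄ · vol(A). -/
open MeasureTheory ProbabilityTheory

/-- Lemma 2 of the paper. Let `κ` be a Markov kernel on `ℝⁿ` with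
transition density bounded by `φbar`, and let `P` be the law on the path space `ℕ → ℝⁿ`
of the Markov chain started at `s₀` with kernel `κ` (as given by the Ionescu–Tulcea
construction, characterized here by its one-dimensional marginals: the time-`0` marginal
is `dirac s₀` and the time-`(k+1)` marginal is the time-`k` marginal composed with `κ`).
Then for every measurable set `A`, the probability that the whole trajectory remains in
`A` is at most `φbar * vol A`. -/
theorem prob_traj_mem_le_of_kernel_density_bounded
    (n : ℕ) (κ : Kernel (EuclideanSpace ℝ (Fin n)) (EuclideanSpace ℝ (Fin n)))
    [IsMarkovKernel κ] (φbar : ℝ) (hφbar : 0 ≤ φbar)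
    (hκ : ∀ (x : EuclideanSpace ℝ (Fin n)) (B : Set (EuclideanSpace ℝ (Fin n))),
      MeasurableSet B → κ x B ≤ ENNReal.ofReal φbar * volume B)
    (s₀ : EuclideanSpace ℝ (Fin n))
    (P : Measure (ℕ → EuclideanSpace ℝ (Fin n))) [IsProbabilityMeasure P]
    (hP0 : P.map (fun ω => ω 0) = Measure.dirac s₀)
    (hPsucc : ∀ k : ℕ,
      P.map (fun ω => ω (k + 1)) = (P.map (fun ω => ω k)).bind (fun x => κ x))
    (A : Set (EuclideanSpace ℝ (Fin n))) (hA : MeasurableSet A) :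
    P {ω : ℕ → EuclideanSpace ℝ (Fin n) | ∀ k : ℕ, 1 ≤ k → ω k ∈ A} ≤
      ENNReal.ofReal φbar * volume A := by
  have h1 : P.map (fun ω => ω (0 + 1)) = κ s₀ := by
    rw [hPsucc 0, hP0, Measure.dirac_bind κ.measurable]
  calc P {ω : ℕ → EuclideanSpace ℝ (Fin n) | ∀ k : ℕ, 1 ≤ k → ω k ∈ A}
      ≤ P ((fun ω : ℕ → EuclideanSpace ℝ (Fin n) => ω (0 + 1)) ⁻¹' A) :=
        measure_mono fun ω hω => hω 1 le_rfl
    _ = κ s₀ A := by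
        rw [← h1, Measure.map_apply (by fun_prop) hA]
    _ ≤ ENNReal.ofReal φbar * volume A := hκ s₀ A hA
end

section
/- (Cross-update decrease of the joint Lyapunov candidate; key inequality in the proof of Theorem 5 of the paper.) Let Θ be a normed vector space, θ_p, θ_{p+1}, θ⋆ ∈ Θ, and r ∈ (0,1) with ‖θ_{p+1} − θ⋆‖ ≤ r‖θ_p − θ⋆‖. Let S be a set, α_V > 0, and let V_p, V_{p+1} : S → ℝ satisfy V_{p+1}(s) − V_p(s) ≤ α_V‖θ_{p+1} − θ_p‖ for all s ∈ S. Then for every ζ ≥ α_V(r+1)/(1−r) and every s ∈ S: V_{p+1}(s) + ζ‖θ_{p+1} − θ⋆‖ ≤ V_p(s) + ζ‖θ_p − θ⋆‖. -/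
/-- cross-update decrease of the joint Lyapunov candidate; key
inequality in the proof of Theorem 5 of the paper. Under the linear-convergence
assumption on the parameters and the Lipschitz-type regularity of the value functions,
for every `ζ ≥ α_V (r + 1) / (1 - r)` the joint Lyapunov candidate
`W p (s) = V p (s) + ζ ‖θ p − θ⋆‖` does not increase across a parameter update. -/
theorem joint_lyapunov_cross_update_decrease
    {Θ : Type*} [NormedAddCommGroup Θ] [NormedSpace ℝ Θ]
    (θp θp1 θstar : Θ) (r : ℝ) (hr0 : 0 < r) (hr1 : r < 1)
    (hconv : ‖θp1 - θstar‖ ≤ r * ‖θp - θstar‖)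
    {S : Type*} (αV : ℝ) (hαV : 0 < αV)
    (Vp Vp1 : S → ℝ)
    (hreg : ∀ s : S, Vp1 s - Vp s ≤ αV * ‖θp1 - θp‖)
    (ζ : ℝ) (hζ : αV * (r + 1) / (1 - r) ≤ ζ) :
    ∀ s : S, Vp1 s + ζ * ‖θp1 - θstar‖ ≤ Vp s + ζ * ‖θp - θstar‖ := by
  intro s
  have h1r : 0 < 1 - r := by linarith
  have hζ0 : 0 ≤ ζ := le_trans (by positivity) hζ
  have hk : αV * (r + 1) ≤ ζ * (1 - r) := (div_le_iff₀ h1r).mp hζ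
  have htri : ‖θp1 - θp‖ ≤ ‖θp1 - θstar‖ + ‖θp - θstar‖ := by
    have h := norm_sub_le (θp1 - θstar) (θp - θstar)
    rwa [sub_sub_sub_cancel_right] at h
  have h1 : αV * ‖θp1 - θp‖ ≤ αV * ((r + 1) * ‖θp - θstar‖) :=
    mul_le_mul_of_nonneg_left (by linarith) hαV.le
  have h2 := mul_le_mul_of_nonneg_right hk (norm_nonneg (θp - θstar))
  have h3 := mul_le_mul_of_nonneg_left hconv hζ0
  have h4 := hreg s
  linarith
end

section
/- (Strict decrease at an update step; inequality (39)–(42) in the proof of Theorem 5 of the paper.) Let Θ be a normed vector space, θ_p, θ_{p+1}, θ⋆ ∈ Θ, and r ∈ (0,1) with ‖θ_{p+1} − θ⋆‖ ≤ r‖θ_p − θ⋆‖. Let S be a set, α_V > 0, and let V_p, V_{p+1} : S → ℝ satisfy V_{p+1}(s) − V_p(s) ≤ α_V‖θ_{p+1} − θ_p‖ for all s ∈ S. Let ζ ≥ α_V(r+1)/(1−r). If s_i, s_{i+1} ∈ S satisfy V_{p+1}(s_{i+1}) < V_{p+1}(s_i), then V_{p+1}(s_{i+1}) + ζ‖θ_{p+1}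 − θ⋆‖ < V_p(s_i) + ζ‖θ_p − θ⋆‖, i.e. the joint Lyapunov candidate strictly decreases across the parameter update. -/
/-- strict decrease at an update step; inequalities (39)–(42) in the
proof of Theorem 5 of the paper. Under the linear-convergence assumption on the
parameters and the Lipschitz-type regularity of the value functions, with
`ζ ≥ α_V (r + 1) / (1 - r)`, if the new value function strictly decreases along the
transition `s_i → s_{i+1}`, then the joint Lyapunov candidate strictly decreases
across the parameter update. -/
theorem joint_lyapunov_strict_decrease_at_update
    {Θ : Type*} [NormedAddCommGroup Θ] [NormedSpace ℝ Θ]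
    (θp θp1 θstar : Θ) (r : ℝ) (hr0 : 0 < r) (hr1 : r < 1)
    (hconv : ‖θp1 - θstar‖ ≤ r * ‖θp - θstar‖)
    {S : Type*} (αV : ℝ) (hαV : 0 < αV)
    (Vp Vp1 : S → ℝ)
    (hreg : ∀ s : S, Vp1 s - Vp s ≤ αV * ‖θp1 - θp‖)
    (ζ : ℝ) (hζ : αV * (r + 1) / (1 - r) ≤ ζ)
    (si si1 : S) (hdec : Vp1 si1 < Vp1 si) :
    Vp1 si1 + ζ * ‖θp1 - θstar‖ < Vp si + ζ * ‖θp - θstar‖ := by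
  have h1 : 0 < 1 - r := by linarith
  have hz0 : 0 ≤ ζ := le_trans (by positivity) hζ
  have hz : αV * (r + 1) ≤ ζ * (1 - r) := (div_le_iff₀ h1).mp hζ
  have htri : ‖θp1 - θp‖ ≤ ‖θp1 - θstar‖ + ‖θp - θstar‖ := by
    have h := norm_sub_le (θp1 - θstar) (θp - θstar)
    rwa [sub_sub_sub_cancel_right] at h
  have hr := hreg si
  have ha : αV * ‖θp1 - θp‖ ≤ αV * ((r + 1) * ‖θp - θstar‖) :=
    mul_le_mul_of_nonneg_left (by linarith) hαV.le
  have hb := mul_le_mul_of_nonneg_right hz (norm_nonneg (θp - θstar))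
  have hc := mul_le_mul_of_nonneg_left hconv hz0
  linarith
end
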